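/- Let G = (𝒩, w) be a closed integer octagonal graph. Define w_t by w_t(i,ī) = 2⌊w(i,ī)/2⌋ for all i ∈ 𝒩 and w_t(i,j) = w(i,j) whenever j ≠ ī, and define w_T by w_T(i,j) = min{ w(i,j), ⌊w(i,ī)/2⌋ + ⌊w(j̄,j)/2⌋ }. If w_t(i,ī) + w_t(ī,i) ≥ 0 for all i ∈ 𝒩, then w_T is an octagonal graph (i.e., w_T is consistent and coherent). -/

import Mathlib

/-- Extended rationals: ℚ ∪ {+∞}. -/
abbrev Qinf := WithTop ℚ

/-- Weight of a path (list of nodes): sum of the weights of its arcs. -/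
def pathWeight {N : Type*} (w : N → N → Qinf) : List N → Qinf
  | [] => 0
  | [_] => 0
  | a :: b :: l => w a b + pathWeight w (b :: l)

/-- A proper cycle: at least two arcs, first node equals last node,
    consecutive nodes distinct. -/
def IsProperCycle {N : Type*} (l : List N) : Prop :=
  3 ≤ l.length ∧ l.head? = l.getLast? ∧ l.Chain' (· ≠ ·)

/-- A graph is consistent if it has no proper cycle of negative weight. -/
def Consistent {N : Type*} (w : N → N → Qinf) : Prop :=
  ∀ l : List N, IsProperCycle l → 0 ≤ pathWeight w l

/-- A consistent graph is closed if self-loops have weight 0 and the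
    triangle inequality holds. -/
def ClosedG {N : Type*} (w : N → N → Qinf) : Prop :=
  Consistent w ∧ (∀ i, w i i = 0) ∧ ∀ i j k, w i j ≤ w i k + w k j

/-- The "bar" involution on nodes: ī = i+1 for even i, ī = i-1 for odd i. -/
def bar {n : ℕ} (i : Fin (2 * n)) : Fin (2 * n) :=
  if _h : i.val % 2 = 0 then ⟨i.val + 1, by have := i.isLt; omega⟩
  else ⟨i.val - 1, by have := i.isLt; omega⟩

/-- Coherence: w(i,j) = w(j̄,ī). -/
def Coherent {n : ℕ} (w : Fin (2 * n) → Fin (2 * n) → Qinf) : Prop :=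
  ∀ i j, w i j = w (bar j) (bar i)

/-- An octagonal graph: consistent and coherent. -/
def Octagonal {n : ℕ} (w : Fin (2 * n) → Fin (2 * n) → Qinf) : Prop :=
  Consistent w ∧ Coherent w

/-- Pointwise order on graphs. -/
def GLe {n : ℕ} (w₁ w₂ : Fin (2 * n) → Fin (2 * n) → Qinf) : Prop :=
  ∀ i j, w₁ i j ≤ w₂ i j

/-- Halving on ℚ∞ (with +∞/2 = +∞). -/
def half (x : Qinf) : Qinf := x.map (fun q => q / 2)

/-- Floored halving on ℚ∞ (with ⌊+∞/2⌋ = +∞). -/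
def fhalf (x : Qinf) : Qinf := x.map (fun q => ((⌊q / 2⌋ : ℤ) : ℚ))

/-- Integer weights: every weight is an integer or +∞. -/
def IntWeights {n : ℕ} (w : Fin (2 * n) → Fin (2 * n) → Qinf) : Prop :=
  ∀ i j, w i j = ⊤ ∨ ∃ d : ℤ, w i j = ((d : ℚ) : Qinf)

/-- A strongly closed octagonal graph. -/
def StronglyClosed {n : ℕ} (w : Fin (2 * n) → Fin (2 * n) → Qinf) : Prop :=
  Octagonal w ∧ ClosedG w ∧ ∀ i j, 2 * w i j ≤ w i (bar i) + w (bar j) j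

/-- A tightly closed integer octagonal graph. -/
def TightlyClosed {n : ℕ} (w : Fin (2 * n) → Fin (2 * n) → Qinf) : Prop :=
  IntWeights w ∧ StronglyClosed w ∧
    ∀ i, w i (bar i) = ⊤ ∨ ∃ d : ℤ, w i (bar i) = (((2 * d : ℤ) : ℚ) : Qinf)


theorem aux_bar_bar {n : ℕ} (i : Fin (2 * n)) : bar (bar i) = i := by
  apply Fin.ext
  have hv : ∀ k : Fin (2 * n), (bar k).val = if k.val % 2 = 0 then k.val + 1 else k.val - 1 := by
    intro k
    unfold bar
    split_ifs <;> rfl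
  rw [hv, hv]
  split_ifs <;> omega

theorem aux_path {N : Type*} (v : N → N → Qinf) (h0 : ∀ i, v i i = 0)
    (ht : ∀ i j k, v i j ≤ v i k + v k j) (l : List N) :
    ∀ a b, (a :: l).getLast? = some b → v a b ≤ pathWeight v (a :: l) := by
  induction l with
  | nil =>
    intro a b h
    simp at h
    subst h
    simp [pathWeight, h0]
  | cons c l ih =>
    intro a b h
    have h' : (c :: l).getLast? = some b := by simpa using h
    have := ih c b h'
    simp only [pathWeight]
    exact (ht a b c).trans (by gcongr)

theorem aux_fhalf (x y z : Qinf) (hz : z = ⊤ ∨ ∃ d : ℤ, z = ((d : ℚ) : Qinf))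
    (h : x ≤ z + (y + z)) : fhalf x ≤ z + fhalf y := by
  rcases hz with rfl | ⟨d, rfl⟩
  · simp
  cases y using WithTop.recTopCoe with
  | top => simp [fhalf]
  | coe y =>
    cases x using WithTop.recTopCoe with
    | top =>
      rw [← WithTop.coe_add, ← WithTop.coe_add] at h
      simp at h
    | coe x =>
      rw [← WithTop.coe_add, ← WithTop.coe_add, WithTop.coe_le_coe] at h
      simp only [fhalf, WithTop.map_coe]
      rw [← WithTop.coe_add, WithTop.coe_le_coe]
      have h1 : ⌊x / 2⌋ ≤ ⌊y / 2 + (d : ℚ)⌋ := Int.floor_le_floor (by linarith)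
      rw [Int.floor_add_intCast] at h1
      have h2 : ((⌊x / 2⌋ : ℤ) : ℚ) ≤ ((⌊y / 2⌋ + d : ℤ) : ℚ) := by exact_mod_cast h1
      push_cast at h2
      linarith

theorem aux_double (x y : Qinf) (h : 0 ≤ 2 * x + 2 * y) : 0 ≤ x + y := by
  cases x using WithTop.recTopCoe with
  | top => simp
  | coe x =>
    cases y using WithTop.recTopCoe with
    | top => simp
    | coe y =>
      have e : (2 : Qinf) = ((2 : ℚ) : Qinf) := rfl
      rw [e, ← WithTop.coe_mul, ← WithTop.coe_mul, ← WithTop.coe_add, ← WithTop.coe_zero,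
        WithTop.coe_le_coe] at h
      have h3 : (0 : ℚ) ≤ x + y := by linarith
      exact_mod_cast h3

/-- Consistency check for the tight closure: if after tightening
    the unary constraints no pair (i,ī) exhibits a negative cycle, then the
    candidate tight closure is an octagonal graph. -/
theorem tight_closure_consistency_condition
    {n : ℕ} (hn : 1 ≤ n) (w : Fin (2 * n) → Fin (2 * n) → Qinf)
    (hoct : Octagonal w) (hint : IntWeights w) (hcl : ClosedG w)
    (wt wT : Fin (2 * n) → Fin (2 * n) → Qinf)
    (hwt : ∀ i j, wt i j = if j = bar i then 2 * fhalf (w i j) else w i j)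
    (hwT : ∀ i j, wT i j = min (w i j) (fhalf (w i (bar i)) + fhalf (w (bar j) j)))
    (hpos : ∀ i, 0 ≤ wt i (bar i) + wt (bar i) i) :
    Octagonal wT := by
  obtain ⟨_, hco⟩ := hoct
  obtain ⟨_, h0, ht⟩ := hcl
  have bb := @aux_bar_bar n
  have hp : ∀ i, 0 ≤ fhalf (w i (bar i)) + fhalf (w (bar i) i) := by
    intro i
    have := hpos i
    rw [hwt, hwt, if_pos rfl, if_pos (bb i).symm] at this
    exact aux_double _ _ this
  have hf : ∀ i k, fhalf (w i (bar i)) ≤ w i k + fhalf (w k (bar k)) := by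
    intro i k
    apply aux_fhalf _ _ _ (hint i k)
    refine (ht i (bar i) k).trans ?_
    gcongr
    refine (ht k (bar i) (bar k)).trans ?_
    rw [← hco i k]
  have hg : ∀ j k, fhalf (w (bar j) j) ≤ fhalf (w (bar k) k) + w k j := by
    intro j k
    have := hf (bar j) (bar k)
    rw [bb, bb, ← hco k j, add_comm] at this
    exact this
  have hT0 : ∀ i, wT i i = 0 := by
    intro i
    rw [hwT, h0, min_eq_left (hp i)]
  have hTt : ∀ i j k, wT i j ≤ wT i k + wT k j := by
    intro i j k
    have key : ∀ a b, (a = w i k ∨ a = fhalf (w i (bar i)) + fhalf (w (bar k) k)) →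
        (b = w k j ∨ b = fhalf (w k (bar k)) + fhalf (w (bar j) j)) → wT i j ≤ a + b := by
      rintro a b (rfl | rfl) (rfl | rfl)
      · rw [hwT]; exact (min_le_left _ _).trans (ht i j k)
      · rw [hwT, ← add_assoc]
        refine (min_le_right _ _).trans ?_
        gcongr
        exact hf i k
      · rw [hwT, add_assoc]
        refine (min_le_right _ _).trans ?_
        gcongr
        exact hg j k
      · rw [hwT]
        refine (min_le_right _ _).trans ?_
        calc fhalf (w i (bar i)) + fhalf (w (bar j) j)
            = fhalf (w i (bar i)) + fhalf (w (bar j) j) + 0 := (add_zero _).symm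
          _ ≤ fhalf (w i (bar i)) + fhalf (w (bar j) j)
              + (fhalf (w k (bar k)) + fhalf (w (bar k) k)) := by
                gcongr
                exact hp k
          _ = _ := by ac_rfl
    rw [hwT i k, hwT k j]
    exact key _ _ (min_choice _ _) (min_choice _ _)
  refine ⟨?_, ?_⟩
  · rintro l ⟨hl, hh, -⟩
    cases l with
    | nil => simp at hl
    | cons a l =>
      have := aux_path wT hT0 hTt l a a (by rw [← hh]; rfl)
      rwa [hT0] at this
  · intro i j
    rw [hwT, hwT, bb, bb, ← hco i j, add_comm (fhalf (w i (bar i)))]
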